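/- With b(n,k) defined by A_n(x) = Σ_{k=0}^n b(n,k)(x−1)^k, for all n ≥ 1 and k ≥ 1 one has b(n,k) = Σ_{i=1}^{n} C_{i−1}·b(n−i,k−1), where b(m,0) = C_m for all m ≥ 0 and b(n,k) = 0 if k > n. -/

import Mathlib

/-!
The coefficient `b(n,k)` counts pairs `(π, S)` with `π` a `321`-avoiding permutation and `S` a
`k`-set of fixed points of `π` (`bCoef_eq_sum_choose`). If `m` is a fixed point of a
`321`-avoiding permutation `π`, no larger value precedes it: otherwise some smaller value would
follow it and complete a `321` pattern (`lt_of_av_fixed`). Hence `π = σ ⊕ 1 ⊕ τ` with the `1` at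
`m`, where `σ` and `τ` are arbitrary `321`-avoiding permutations, and the fixed points of `π` after
`m` are those of `τ`. Taking `m = min S` gives the recurrence (`sum_fixed_at`), provided that there
are `catalan n` permutations in `S_n(321)`.

For that count (`card_avSet`), let `N(n,d)` be the number of `321`-avoiding permutations of
`Fin n` that increase from position `d` on. Inserting the largest value at position `p` preserves
`321`-avoidance exactly when the entries from `p` on increase, which yields
`N(n+1,d) = N(n,d) + ∑_{p<d} N(n,p)` for `d ≤ n` (`incCount_succ`). This is the recurrence of the
Catalan triangle, so `N(n,d) = binom(n+d,n) - binom(n+d,n+1)`, and `N(n,n)` is the Catalan number.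
-/

open Finset Polynomial

/-- `π` contains the pattern `α`: there are indices `i₁ < ⋯ < i_m` whose images under `π`
are in the same relative order as the values of `α`. -/
def ContainsPat {n m : ℕ} (π : Equiv.Perm (Fin n)) (α : Fin m → Fin m) : Prop :=
  ∃ f : Fin m → Fin n, StrictMono f ∧ ∀ a b, π (f a) < π (f b) ↔ α a < α b

/-- `π` avoids the pattern `α`. -/
def AvoidsPat {n m : ℕ} (π : Equiv.Perm (Fin n)) (α : Fin m → Fin m) : Prop :=
  ¬ ContainsPat π α

/-- Number of fixed points of a permutation. -/
noncomputable def fpCount {n : ℕ} (π : Equiv.Perm (Fin n)) : ℕ :=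
  Nat.card {i : Fin n // π i = i}

open Classical in
/-- `APoly n` = weight enumerator of `321`-avoiding permutations of `{1,…,n}` by number
of fixed points. -/
noncomputable def APoly (n : ℕ) : Polynomial ℤ :=
  ∑ π : Equiv.Perm (Fin n),
    if AvoidsPat π ![2, 1, 0] then (Polynomial.X : Polynomial ℤ) ^ fpCount π else 0

/-- `bCoef n k` : the coefficients in the expansion `APoly n = ∑ₖ bCoef n k * (x-1)^k`. -/
noncomputable def bCoef (n k : ℕ) : ℤ :=
  ((APoly n).comp (Polynomial.X + 1)).coeff k

/-- The concrete form of `321`-avoidance: no three positions carry a decreasing triple. -/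
def Av {n : ℕ} (π : Equiv.Perm (Fin n)) : Prop :=
  ∀ i j k : Fin n, i < j → j < k → π j < π i → π k < π j → False

lemma avoidsPat_iff_av {n : ℕ} (π : Equiv.Perm (Fin n)) :
    AvoidsPat π ![2, 1, 0] ↔ Av π := by
  constructor
  · intro h i j k hij hjk h1 h2
    refine h ⟨![i, j, k], ?_, ?_⟩
    · intro a b hab
      have h3 := hij.trans hjk
      fin_cases a <;> fin_cases b <;> simp_all
    · intro a b
      have h3 := h2.trans h1
      fin_cases a <;> fin_cases b <;> simp [h1, h2, h3, h1.le, h2.le, h3.le]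
  · rintro h ⟨f, hf, hp⟩
    refine h (f 0) (f 1) (f 2) (hf (by decide)) (hf (by decide)) ?_ ?_
    · rw [hp]; decide
    · rw [hp]; decide

open Classical in
/-- The finite set of `321`-avoiding permutations of `Fin n`. -/
noncomputable def avSet (n : ℕ) : Finset (Equiv.Perm (Fin n)) := univ.filter Av

lemma mem_avSet {n : ℕ} {π : Equiv.Perm (Fin n)} : π ∈ avSet n ↔ Av π := by
  simp [avSet]

/-- `b(n,k)` counts the pairs of a `321`-avoiding permutation and a `k`-set of its fixed points. -/
lemma bCoef_eq_sum_choose (n k : ℕ) :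
    bCoef n k = ∑ π ∈ avSet n, ((fpCount π).choose k : ℤ) := by
  classical
  have h : APoly n = ∑ π ∈ avSet n, (X : ℤ[X]) ^ fpCount π := by
    unfold APoly avSet
    rw [Finset.sum_filter]
    refine Finset.sum_congr rfl fun π _ => ?_
    simp only [avoidsPat_iff_av]
  unfold bCoef
  rw [h, Polynomial.sum_comp, Polynomial.finsetSum_coeff]
  refine Finset.sum_congr rfl fun π _ => ?_
  simp [Polynomial.coeff_X_add_one_pow]

/-! ### Inserting the largest value -/

/-- Insert the new largest value `n` at position `p` of `π`. -/
def insMax {n : ℕ} (p : Fin (n + 1)) (π : Equiv.Perm (Fin n)) : Equiv.Perm (Fin (n + 1)) :=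
  (finSuccEquiv' p).trans ((Equiv.optionCongr π).trans (finSuccEquiv' (Fin.last n)).symm)

@[simp] lemma insMax_self {n : ℕ} (p : Fin (n + 1)) (π : Equiv.Perm (Fin n)) :
    insMax p π p = Fin.last n := by
  simp [insMax]

@[simp] lemma insMax_succAbove {n : ℕ} (p : Fin (n + 1)) (π : Equiv.Perm (Fin n)) (i : Fin n) :
    insMax p π (p.succAbove i) = (π i).castSucc := by
  simp [insMax]

lemma insMax_bijective (n : ℕ) :
    Function.Bijective (fun x : Fin (n + 1) × Equiv.Perm (Fin n) => insMax x.1 x.2) := by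
  rw [Fintype.bijective_iff_injective_and_card]
  constructor
  · rintro ⟨p, π⟩ ⟨q, ρ⟩ h
    simp only at h
    have hpq : p = q := by
      apply (insMax p π).injective
      rw [insMax_self, h, insMax_self]
    subst hpq
    have : π = ρ := by
      ext i
      have := congrArg (fun e : Equiv.Perm (Fin (n + 1)) => ((e (p.succAbove i) : Fin _) : ℕ)) h
      simpa using this
    rw [this]
  · simp [Fintype.card_perm, Nat.factorial_succ]

/-- The entries of `π` in positions `≥ d` increase. -/
def IncFrom {n : ℕ} (d : ℕ) (π : Equiv.Perm (Fin n)) : Prop :=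
  ∀ i j : Fin n, d ≤ (i : ℕ) → i < j → π i < π j

/-- Everything to the right of the inserted maximum has to increase, as a descent there would
complete it to a `321`. -/
lemma av_insMax {n : ℕ} (p : Fin (n + 1)) (π : Equiv.Perm (Fin n)) :
    Av (insMax p π) ↔ Av π ∧ IncFrom p π := by
  constructor
  · intro h
    constructor
    · intro i j k hij hjk h1 h2
      refine h (p.succAbove i) (p.succAbove j) (p.succAbove k) ?_ ?_ ?_ ?_ <;> simpa
    · intro i j hi hij
      by_contra hlt
      have hne : π i ≠ π j := fun e => hij.ne (π.injective e)
      have h1 : π j < π i := lt_of_le_of_ne (not_lt.mp hlt) hne.symm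
      refine h p (p.succAbove i) (p.succAbove j) ?_ (by simpa) (by simp [Fin.castSucc_lt_last])
        (by simpa)
      rw [Fin.lt_succAbove_iff_le_castSucc]
      exact hi
  · rintro ⟨h, hp⟩ i j k hij hjk h1 h2
    rcases Fin.eq_self_or_eq_succAbove p j with rfl | ⟨j, rfl⟩
    · rw [insMax_self] at h1
      exact absurd h1 (not_lt.mpr (Fin.le_last _))
    rcases Fin.eq_self_or_eq_succAbove p k with rfl | ⟨k, rfl⟩
    · rw [insMax_self] at h2
      exact absurd h2 (not_lt.mpr (Fin.le_last _))
    rw [Fin.succAbove_lt_succAbove_iff] at hjk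
    rw [insMax_succAbove, insMax_succAbove, Fin.castSucc_lt_castSucc_iff] at h2
    rcases Fin.eq_self_or_eq_succAbove p i with rfl | ⟨i, rfl⟩
    · rw [Fin.lt_succAbove_iff_le_castSucc] at hij
      exact absurd (hp j k hij hjk) (not_lt.mpr h2.le)
    · rw [Fin.succAbove_lt_succAbove_iff] at hij
      rw [insMax_succAbove, insMax_succAbove, Fin.castSucc_lt_castSucc_iff] at h1
      exact h i j k hij hjk h1 h2

lemma incFrom_insMax_last {n : ℕ} (d : ℕ) (π : Equiv.Perm (Fin n)) :
    IncFrom d (insMax (Fin.last n) π) ↔ IncFrom d π := by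
  have hs : ∀ i : Fin n, insMax (Fin.last n) π i.castSucc = (π i).castSucc := fun i => by
    rw [← insMax_succAbove, Fin.succAbove_last]
  constructor
  · intro h i j hi hij
    have := h i.castSucc j.castSucc hi hij
    rwa [hs, hs, Fin.castSucc_lt_castSucc_iff] at this
  · intro h i j hi hij
    induction i using Fin.lastCases with
    | last => exact absurd hij (not_lt.mpr (Fin.le_last _))
    | cast i =>
      induction j using Fin.lastCases with
      | last => rw [hs, insMax_self]; exact Fin.castSucc_lt_last _
      | cast j =>
        rw [hs, hs, Fin.castSucc_lt_castSucc_iff]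
        exact h i j hi hij

lemma incFrom_insMax_castSucc {n : ℕ} (d : ℕ) (p : Fin n) (π : Equiv.Perm (Fin n))
    (hp : IncFrom p π) : IncFrom d (insMax p.castSucc π) ↔ (p : ℕ) < d := by
  constructor
  · intro h
    by_contra hd
    have := h p.castSucc p.succ (not_lt.mp hd) (Fin.castSucc_lt_succ)
    rw [insMax_self] at this
    exact absurd this (not_lt.mpr (Fin.le_last _))
  · intro hd i j hi hij
    have key : ∀ i : Fin (n + 1), d ≤ (i : ℕ) →
        ∃ i' : Fin n, i = p.castSucc.succAbove i' ∧ (p : ℕ) ≤ i' := by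
      intro i hi
      rcases Fin.eq_self_or_eq_succAbove p.castSucc i with rfl | ⟨i', rfl⟩
      · exact absurd hd (not_lt.mpr hi)
      · refine ⟨i', rfl, ?_⟩
        have : p.castSucc < p.castSucc.succAbove i' := Fin.lt_def.mpr (lt_of_lt_of_le hd hi)
        rw [Fin.lt_succAbove_iff_le_castSucc] at this
        exact this
    obtain ⟨i, rfl, hi'⟩ := key i hi
    obtain ⟨j, rfl, -⟩ := key j (hi.trans hij.le)
    rw [Fin.succAbove_lt_succAbove_iff] at hij
    rw [insMax_succAbove, insMax_succAbove, Fin.castSucc_lt_castSucc_iff]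
    exact hp i j hi' hij

open Classical in
/-- The number of `321`-avoiding permutations of `Fin n` increasing from position `d` on; these
form the Catalan triangle. -/
noncomputable def incCount (n d : ℕ) : ℕ :=
  #{π : Equiv.Perm (Fin n) | Av π ∧ IncFrom d π}

lemma incCount_succ (n d : ℕ) (hd : d ≤ n) :
    incCount (n + 1) d = incCount n d + ∑ p ∈ range d, incCount n p := by
  classical
  have h1 : incCount (n + 1) d = ∑ p : Fin (n + 1),
      #{π : Equiv.Perm (Fin n) | Av (insMax p π) ∧ IncFrom d (insMax p π)} := by
    unfold incCount
    simp only [Finset.card_filter]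
    rw [← Fintype.sum_prod_type']
    exact ((insMax_bijective n).sum_comp
      (fun σ => if Av σ ∧ IncFrom d σ then 1 else 0)).symm
  rw [h1, Fin.sum_univ_castSucc, add_comm]
  congr 1
  · unfold incCount
    congr 1
    ext π
    have : IncFrom n π := fun i _ hi => absurd i.2 (not_lt.mpr hi)
    simp [av_insMax, incFrom_insMax_last, this]
  · have h2 : ∀ p : Fin n,
        #{π : Equiv.Perm (Fin n) | Av (insMax p.castSucc π) ∧ IncFrom d (insMax p.castSucc π)}
          = if (p : ℕ) < d then incCount n p else 0 := by
      intro p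
      have h3 : ∀ π : Equiv.Perm (Fin n),
          (Av (insMax p.castSucc π) ∧ IncFrom d (insMax p.castSucc π)) ↔
            (Av π ∧ IncFrom p π) ∧ (p : ℕ) < d := by
        intro π
        rw [av_insMax]
        exact and_congr_right fun h => incFrom_insMax_castSucc d p π h.2
      simp only [h3]
      split_ifs with hpd
      · simp [incCount, hpd]
      · simp [hpd]
    rw [Finset.sum_congr rfl fun p _ => h2 p,
      Fin.sum_univ_eq_sum_range (fun p => if p < d then incCount n p else 0) n,
      ← Finset.sum_filter]
    congr 1
    ext p
    simp
    omega

lemma incCount_zero_right (n : ℕ) : incCount n 0 = 1 := by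
  induction n with
  | zero =>
    have : ∀ π : Equiv.Perm (Fin 0), Av π ∧ IncFrom 0 π :=
      fun π => ⟨fun i => i.elim0, fun i => i.elim0⟩
    simp [incCount, this]
  | succ n ih => rw [incCount_succ n 0 (Nat.zero_le _), ih]; simp

lemma incFrom_of_le {n d : ℕ} (h : n ≤ d + 1) (π : Equiv.Perm (Fin n)) : IncFrom d π := by
  intro i j hi hij
  have := j.2
  have : (i : ℕ) < j := hij
  omega

/-- The closed form of the Catalan triangle. -/
lemma incCount_add_choose (n : ℕ) :
    ∀ d ≤ n, incCount n d + (n + d).choose (n + 1) = (n + d).choose n := by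
  induction n with
  | zero =>
    intro d hd
    obtain rfl : d = 0 := by omega
    simp [incCount_zero_right]
  | succ n ih =>
    intro d
    induction d with
    | zero => intro _; simp [incCount_zero_right]
    | succ d ihd =>
      intro hd
      have e0 := ihd (by omega)
      have e1 : (n + 1 + (d + 1)).choose (n + 1 + 1)
          = (n + 1 + d).choose (n + 1) + (n + 1 + d).choose (n + 1 + 1) :=
        Nat.choose_succ_succ _ _
      have e2 : (n + 1 + (d + 1)).choose (n + 1)
          = (n + 1 + d).choose n + (n + 1 + d).choose (n + 1) :=
        Nat.choose_succ_succ _ _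
      rcases Nat.lt_or_ge d n with hdn | hdn
      · have e3 := ih (d + 1) hdn
        rw [show n + (d + 1) = n + 1 + d by ring] at e3
        have e4 := incCount_succ n d (by omega)
        have e5 := incCount_succ n (d + 1) hdn
        rw [Finset.sum_range_succ] at e5
        omega
      · obtain rfl : d = n := by omega
        -- increasing from the last position on is no condition
        have e3 : incCount (d + 1) (d + 1) = incCount (d + 1) d := by
          unfold incCount
          congr 1
          ext π
          simp [incFrom_of_le le_rfl π, incFrom_of_le (Nat.le_succ (d + 1)) π]
        have e4 : (d + 1 + d).choose d = (d + 1 + d).choose (d + 1) :=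
          (Nat.choose_symm_add).symm
        omega

lemma card_avSet (n : ℕ) : #(avSet n) = catalan n := by
  have h0 : #(avSet n) = incCount n n := by
    unfold avSet incCount
    congr 1
    ext π
    simp [incFrom_of_le (Nat.le_succ n) π]
  have h1 := incCount_add_choose n n le_rfl
  have h2 := succ_mul_catalan_eq_centralBinom n
  have h3 := Nat.choose_succ_right_eq (n + n) n
  rw [Nat.centralBinom, two_mul] at h2
  rw [Nat.add_sub_cancel] at h3
  rw [h0]
  have : (n + 1) * incCount n n = (n + 1) * catalan n := by
    nlinarith
  exact Nat.eq_of_mul_eq_mul_left (Nat.succ_pos n) this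

/-! ### Splitting at a fixed point -/

/-- The direct sum `σ ⊕ 1 ⊕ τ`. -/
def glue {a c : ℕ} (σ : Equiv.Perm (Fin a)) (τ : Equiv.Perm (Fin c)) :
    Equiv.Perm (Fin (a + (c + 1))) :=
  finSumFinEquiv.permCongr (Equiv.Perm.sumCongr σ (Equiv.Perm.decomposeFin.symm (0, τ)))

section glue

variable {a c : ℕ} (σ : Equiv.Perm (Fin a)) (τ : Equiv.Perm (Fin c))

@[simp] lemma glue_left (i : Fin a) :
    glue σ τ (Fin.castAdd (c + 1) i) = Fin.castAdd (c + 1) (σ i) := by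
  simp [glue]

@[simp] lemma glue_mid : glue σ τ (Fin.natAdd a 0) = Fin.natAdd a 0 := by
  simp [glue, -Fin.natAdd_zero]

@[simp] lemma glue_right (j : Fin c) :
    glue σ τ (Fin.natAdd a j.succ) = Fin.natAdd a (τ j).succ := by
  simp [glue]

end glue

/-- Every position of `Fin (a + (c + 1))` lies before, at, or after position `a`. -/
lemma pos_cases {a c : ℕ} (i : Fin (a + (c + 1))) :
    (∃ i' : Fin a, i = Fin.castAdd (c + 1) i') ∨ i = Fin.natAdd a 0 ∨
      ∃ j : Fin c, i = Fin.natAdd a j.succ := by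
  induction i using Fin.addCases with
  | left i => exact Or.inl ⟨i, rfl⟩
  | right i =>
    induction i using Fin.cases with
    | zero => exact Or.inr (Or.inl rfl)
    | succ j => exact Or.inr (Or.inr ⟨j, rfl⟩)

lemma av_glue {a c : ℕ} (σ : Equiv.Perm (Fin a)) (τ : Equiv.Perm (Fin c)) :
    Av (glue σ τ) ↔ Av σ ∧ Av τ := by
  constructor
  · intro h
    constructor
    · intro i j k hij hjk h1 h2
      refine h (Fin.castAdd _ i) (Fin.castAdd _ j) (Fin.castAdd _ k) ?_ ?_ ?_ ?_ <;>
        simpa using by assumption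
    · intro i j k hij hjk h1 h2
      refine h (Fin.natAdd _ i.succ) (Fin.natAdd _ j.succ) (Fin.natAdd _ k.succ) ?_ ?_ ?_ ?_ <;>
        simpa using by assumption
  · rintro ⟨hσ, hτ⟩ i j k hij hjk h1 h2
    rcases pos_cases i with ⟨i, rfl⟩ | rfl | ⟨i, rfl⟩ <;>
    rcases pos_cases j with ⟨j, rfl⟩ | rfl | ⟨j, rfl⟩ <;>
    rcases pos_cases k with ⟨k, rfl⟩ | rfl | ⟨k, rfl⟩ <;>
    simp only [glue_left, glue_mid, glue_right, Fin.lt_def, Fin.val_castAdd, Fin.val_natAdd,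
      Fin.val_succ, Fin.val_zero] at hij hjk h1 h2 <;>
    first
    | omega
    | exact hσ i j k hij hjk h1 h2
    | exact hτ i j k (by simp only [Fin.lt_def]; omega) (by simp only [Fin.lt_def]; omega)
        (by simp only [Fin.lt_def]; omega) (by simp only [Fin.lt_def]; omega)

lemma glue_injective (a c : ℕ) :
    Function.Injective
      (fun x : Equiv.Perm (Fin a) × Equiv.Perm (Fin c) => glue x.1 x.2) := by
  rintro ⟨σ, τ⟩ ⟨σ', τ'⟩ h
  have h' := fun i => congrArg (fun e : Equiv.Perm (Fin (a + (c + 1))) => ((e i : Fin _) : ℕ)) h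
  have h1 : σ = σ' := by
    ext i
    simpa using h' (Fin.castAdd _ i)
  have h2 : τ = τ' := by
    ext i
    simpa using h' (Fin.natAdd _ i.succ)
  rw [h1, h2]

/-- If a fixed point `m` of a `321`-avoiding permutation were preceded by a larger value, counting
would yield a later smaller value, and the three would form a `321`. -/
lemma lt_of_av_fixed {n : ℕ} {π : Equiv.Perm (Fin n)} (h : Av π) {m : Fin n} (hm : π m = m)
    {i : Fin n} (hi : i < m) : π i < m := by
  by_contra hlt
  have hne : π i ≠ m := fun e => hi.ne (π.injective (e.trans hm.symm))
  have h1 : m < π i := lt_of_le_of_ne (not_lt.mp hlt) hne.symm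
  -- otherwise `π⁻¹` maps the `m` values below `m` into the `m - 1` positions below `m` other than `i`
  have hex : ∃ k, m < k ∧ π k < m := by
    by_contra hno
    push Not at hno
    have hsub : (Finset.Iio m).map π.symm.toEmbedding ⊆ (Finset.Iio m).erase i := by
      intro k hk
      simp only [Finset.mem_map_equiv, Equiv.symm_symm, Finset.mem_Iio] at hk
      have hkm : k ≠ m := fun e => by rw [e, hm] at hk; exact lt_irrefl _ hk
      refine Finset.mem_erase.mpr ⟨fun e => ?_, Finset.mem_Iio.mpr ?_⟩
      · rw [e] at hk; exact hlt hk
      · by_contra hk'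
        exact absurd hk (not_lt.mpr (hno k (lt_of_le_of_ne (not_lt.mp hk') hkm.symm)))
    have := Finset.card_le_card hsub
    rw [Finset.card_map, Finset.card_erase_of_mem (Finset.mem_Iio.mpr hi)] at this
    have hpos : 0 < #(Finset.Iio m) := Finset.card_pos.mpr ⟨i, Finset.mem_Iio.mpr hi⟩
    omega
  obtain ⟨k, hk, hk'⟩ := hex
  exact h i m k hi hk (by rwa [hm]) (by rwa [hm])

lemma exists_glue {a c : ℕ} {π : Equiv.Perm (Fin (a + (c + 1)))} (h : Av π)
    (hm : π (Fin.natAdd a 0) = Fin.natAdd a 0) :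
    ∃ (σ : Equiv.Perm (Fin a)) (τ : Equiv.Perm (Fin c)), glue σ τ = π := by
  set ρ : Equiv.Perm (Fin a ⊕ Fin (c + 1)) := finSumFinEquiv.symm.permCongr π with hρ
  have hmaps : Set.MapsTo ρ (Set.range Sum.inl) (Set.range Sum.inl) := by
    rintro _ ⟨i, rfl⟩
    have hlt : π (Fin.castAdd (c + 1) i) < Fin.natAdd a 0 :=
      lt_of_av_fixed h hm (by simp [Fin.lt_def])
    refine ⟨⟨π (Fin.castAdd (c + 1) i), by simpa [Fin.lt_def] using hlt⟩, ?_⟩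
    apply finSumFinEquiv.injective
    ext
    simp [hρ]
  obtain ⟨⟨σ, τ'⟩, hst⟩ := Equiv.Perm.mem_sumCongrHom_range_of_perm_mapsTo_inl hmaps
  have hst' : Equiv.Perm.sumCongr σ τ' = ρ := hst
  obtain ⟨⟨q, τ⟩, rfl⟩ := Equiv.Perm.decomposeFin.symm.surjective τ'
  have hπ : π = finSumFinEquiv.permCongr
      (Equiv.Perm.sumCongr σ (Equiv.Perm.decomposeFin.symm (q, τ))) := by
    rw [hst', hρ]
    ext i
    simp
  have hq : q = 0 := by
    rw [hπ] at hm
    simpa [-Fin.natAdd_zero] using hm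
  subst hq
  exact ⟨σ, τ, hπ.symm⟩

/-- Choosing a `(k+1)`-subset of `s` amounts to choosing its least element `i` and a `k`-subset of
the elements of `s` above `i`. -/
lemma sum_choose_card_filter_gt {α : Type*} [LinearOrder α] (s : Finset α) (k : ℕ) :
    ∑ i ∈ s, (#{j ∈ s | i < j}).choose k = (#s).choose (k + 1) := by
  induction s using Finset.induction_on_min with
  | empty => simp
  | insert m s hm ih =>
    have hms : m ∉ s := fun h => lt_irrefl _ (hm m h)
    rw [Finset.sum_insert hms, Finset.card_insert_of_notMem hms, Nat.choose_succ_succ]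
    congr 1
    · congr 2
      ext j
      simp only [Finset.mem_filter, Finset.mem_insert]
      constructor
      · rintro ⟨rfl | h, h'⟩
        · exact absurd h' (lt_irrefl _)
        · exact h
      · exact fun h => ⟨Or.inr h, hm j h⟩
    · rw [← ih]
      refine Finset.sum_congr rfl fun i hi => ?_
      congr 2
      ext j
      simp only [Finset.mem_filter, Finset.mem_insert]
      constructor
      · rintro ⟨rfl | h, h'⟩
        · exact absurd h' (not_lt.mpr (hm i hi).le)
        · exact ⟨h, h'⟩
      · exact fun h => ⟨Or.inr h.1, h.2⟩

lemma fpCount_eq {n : ℕ} (π : Equiv.Perm (Fin n)) : fpCount π = #{i | π i = i} := by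
  rw [fpCount, Nat.card_eq_fintype_card, Fintype.card_subtype]

/-- The fixed points of `σ ⊕ 1 ⊕ τ` after the middle one correspond to those of `τ`. -/
lemma card_fixed_after_glue {a c : ℕ} (σ : Equiv.Perm (Fin a)) (τ : Equiv.Perm (Fin c)) :
    #{j ∈ ({i | glue σ τ i = i} : Finset (Fin (a + (c + 1)))) | Fin.natAdd a 0 < j}
      = fpCount τ := by
  rw [fpCount_eq]
  symm
  refine Finset.card_bij (fun j _ => Fin.natAdd a j.succ) ?_ ?_ ?_
  · intro j hj
    have hj' : τ j = j := by simpa using hj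
    simp only [Finset.mem_filter, Finset.mem_univ, true_and, glue_right, hj']
    simp [Fin.lt_def]
  · intro i _ j _ hij
    simpa using hij
  · intro j hj
    simp only [Finset.mem_filter, Finset.mem_univ, true_and] at hj
    obtain ⟨hfix, hlt⟩ := hj
    rcases pos_cases j with ⟨j, rfl⟩ | rfl | ⟨j, rfl⟩
    · simp [Fin.lt_def] at hlt
      omega
    · exact absurd hlt (lt_irrefl _)
    · exact ⟨j, by simpa using hfix, rfl⟩

/-- The pairs `(π, S)` in which the least marked fixed point is `m`. -/
lemma sum_fixed_at (n k : ℕ) (m : Fin n) :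
    ∑ π ∈ avSet n with π m = m, ((#{j ∈ ({i | π i = i} : Finset (Fin n)) | m < j}).choose k : ℤ)
      = (catalan m : ℤ) * bCoef (n - (m + 1)) k := by
  obtain ⟨a, c, rfl, rfl⟩ :
      ∃ (a c : ℕ) (h : n = a + (c + 1)), m = Fin.cast h.symm (Fin.natAdd a 0) :=
    ⟨m, n - (m + 1), by have := m.2; omega, by ext; simp⟩
  have hc : a + (c + 1) - (((Fin.natAdd a 0 : Fin (a + (c + 1))) : ℕ) + 1) = c := by
    simp
    omega
  simp only [Fin.cast_eq_self]
  rw [hc, bCoef_eq_sum_choose, ← card_avSet, Fin.val_natAdd, Fin.val_zero, add_zero,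
    ← nsmul_eq_mul, ← Finset.sum_const, ← Finset.sum_product']
  symm
  refine Finset.sum_bij (fun x _ => glue x.1 x.2) ?_ ?_ ?_ ?_
  · rintro ⟨σ, τ⟩ h
    simp only [Finset.mem_product, mem_avSet] at h
    simp only [Finset.mem_filter, mem_avSet, av_glue, glue_mid]
    exact ⟨h, trivial⟩
  · intro x _ y _ h
    exact glue_injective a c h
  · intro π h
    simp only [Finset.mem_filter, mem_avSet] at h
    obtain ⟨σ, τ, rfl⟩ := exists_glue h.1 h.2
    refine ⟨(σ, τ), ?_, rfl⟩
    simpa only [Finset.mem_product, mem_avSet] using (av_glue σ τ).mp h.1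
  · rintro ⟨σ, τ⟩ _
    rw [card_fixed_after_glue]

/-- For `n, k ≥ 1`: `b(n,k) = ∑_{i=1}^n C_{i-1} b(n-i, k-1)`. -/
theorem bCoef_catalan_recurrence (n k : ℕ) (hn : 1 ≤ n) (hk : 1 ≤ k) :
    bCoef n k = ∑ i ∈ Finset.Icc 1 n, (catalan (i - 1) : ℤ) * bCoef (n - i) (k - 1) := by
  obtain ⟨k, rfl⟩ : ∃ l, k = l + 1 := ⟨k - 1, by omega⟩
  have h1 : bCoef n (k + 1) = ∑ m : Fin n, (catalan m : ℤ) * bCoef (n - (m + 1)) k := by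
    rw [bCoef_eq_sum_choose]
    simp only [← sum_fixed_at, Finset.sum_filter (fun π : Equiv.Perm (Fin n) => π _ = _)]
    rw [Finset.sum_comm]
    refine Finset.sum_congr rfl fun π _ => ?_
    rw [← Finset.sum_filter, fpCount_eq, ← sum_choose_card_filter_gt]
    push_cast
    rfl
  rw [h1, Fin.sum_univ_eq_sum_range (fun m => (catalan m : ℤ) * bCoef (n - (m + 1)) k) n,
    Finset.range_eq_Ico]
  exact Finset.sum_Ico_add' (fun i => (catalan (i - 1) : ℤ) * bCoef (n - i) k) 0 n 1
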